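/- arXiv:2304.02334 — 2 statements merged into one kernel-verified Lean document; each statement's English description precedes it below -/
import Mathlib

section
/- Let W ∈ L¹(ℝ, ℝ) be an even function, let c > 0, and let u : ℝ → ℂ be a bounded smooth (C^∞) function with u' ∈ L²(ℝ) and 1 − |u|² ∈ L²(ℝ) satisfying i·c·u'(x) + u''(x) + (W ⋆ (1 − |u|²))(x)·u(x) = 0 for all x ∈ ℝ, where ⋆ denotes convolution on ℝ. Then u(x) ≠ 0 for every x ∈ ℝ. -/
open MeasureTheory Filter

/-!
Multiplying the equation by `conj u` and taking imaginary parts kills the potential term, whatever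
the real potential is, and shows that `Im (conj u * u') - (c / 2) * (1 - |u|²)` is constant.
Finite energy makes `u'` and `1 - |u|²` simultaneously as small as desired off a set of finite
measure, hence somewhere on `ℝ`, so the constant is `0`. At a zero of `u` this says `c = 0`.
-/

open scoped ComplexConjugate Topology ENNReal InnerProductSpace

theorem tendsto_cofinite_zero_of_memLp {α E : Type*} [MeasurableSpace α] {μ : Measure α}
    [NormedAddCommGroup E] {f : α → E} {p : ℝ≥0∞} (hf : MemLp f p μ) (hp : p ≠ 0) (hp' : p ≠ ∞) :
    Tendsto f μ.cofinite (𝓝 0) := by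
  refine NormedAddGroup.tendsto_nhds_zero.2 fun ε hε => Measure.eventually_cofinite.2 ?_
  lift ε to NNReal using hε.le
  simpa only [not_lt, ← coe_nnnorm, NNReal.coe_le_coe] using
    hf.meas_ge_lt_top hp hp' (NNReal.coe_pos.1 hε).ne'

theorem neBot_cofinite_of_measure_univ_eq_top {α : Type*} [MeasurableSpace α] {μ : Measure α}
    (hμ : μ Set.univ = ∞) : μ.cofinite.NeBot :=
  neBot_iff.2 fun h => not_isFiniteMeasure_iff.2 hμ (cofinite_eq_bot_iff.1 h)

/-- The mass current `Im (conj u * u')` of a wave function `u`. It is `ρ θ'` where `u = √ρ e^{iθ}`,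
but is also meaningful at the zeros of `u`. -/
noncomputable def massCurrent (u : ℝ → ℂ) (x : ℝ) : ℝ :=
  (conj (u x) * deriv u x).im

theorem hasDerivAt_massCurrent {u : ℝ → ℂ} {x : ℝ} (hu : DifferentiableAt ℝ u x)
    (hu' : DifferentiableAt ℝ (deriv u) x) :
    HasDerivAt (massCurrent u) (conj (u x) * deriv (deriv u) x).im x := by
  have h : HasDerivAt (massCurrent u)
      (conj (deriv u x) * deriv u x + conj (u x) * deriv (deriv u) x).im x :=
    Complex.imCLM.hasFDerivAt.comp_hasDerivAt x (hu.hasDerivAt.star.mul hu'.hasDerivAt)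
  rwa [Complex.add_im, ← Complex.normSq_eq_conj_mul_self, Complex.ofReal_im, zero_add] at h

theorem abs_massCurrent_le (u : ℝ → ℂ) (x : ℝ) : |massCurrent u x| ≤ ‖u x‖ * ‖deriv u x‖ := by
  simpa only [massCurrent, norm_mul, Complex.norm_conj] using
    Complex.abs_im_le_norm (conj (u x) * deriv u x)

theorem tendsto_massCurrent_zero {u : ℝ → ℂ} {l : Filter ℝ} {a : ℝ}
    (hu : Tendsto (fun x => ‖u x‖) l (𝓝 a)) (hu' : Tendsto (deriv u) l (𝓝 0)) :
    Tendsto (massCurrent u) l (𝓝 0) :=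
  squeeze_zero_norm (abs_massCurrent_le u) (by simpa using hu.mul hu'.norm)

/-- A twice differentiable solution `u` of `i c u' + u'' + V u = 0`: a wave of speed `c` in the
real potential `V`. The nonlocal Gross–Pitaevskii equation is the case `V = W ⋆ (1 - |u|²)`. -/
structure IsTravelingWave (c : ℝ) (V : ℝ → ℝ) (u : ℝ → ℂ) : Prop where
  differentiable : Differentiable ℝ u
  differentiable_deriv : Differentiable ℝ (deriv u)
  equation : ∀ x, Complex.I * (c : ℂ) * deriv u x + deriv (deriv u) x + (V x : ℂ) * u x = 0

namespace IsTravelingWave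

variable {c : ℝ} {V : ℝ → ℝ} {u : ℝ → ℂ}

theorem im_conj_mul_deriv_deriv (hu : IsTravelingWave c V u) (x : ℝ) :
    (conj (u x) * deriv (deriv u) x).im = -c * ⟪u x, deriv u x⟫_ℝ := by
  have h : conj (u x) * deriv (deriv u) x =
      ((-c : ℝ) : ℂ) * (Complex.I * (conj (u x) * deriv u x)) -
        ((V x * Complex.normSq (u x) : ℝ) : ℂ) := by
    push_cast
    rw [Complex.normSq_eq_conj_mul_self]
    linear_combination conj (u x) * hu.equation x
  rw [h, Complex.sub_im, Complex.ofReal_im, sub_zero, Complex.im_ofReal_mul, Complex.I_mul_im,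
    Complex.inner, mul_comm (deriv u x)]

theorem hasDerivAt_massCurrent_sub (hu : IsTravelingWave c V u) (x : ℝ) :
    HasDerivAt (fun y => massCurrent u y - c / 2 * (1 - ‖u y‖ ^ 2)) 0 x := by
  have hcurrent := hasDerivAt_massCurrent (hu.differentiable x) (hu.differentiable_deriv x)
  have hdensity := ((hu.differentiable x).hasDerivAt.norm_sq.const_sub 1).const_mul (c / 2)
  refine (hcurrent.sub hdensity).congr_deriv ?_
  rw [hu.im_conj_mul_deriv_deriv]
  ring

theorem massCurrent_eq_of_tendsto (hu : IsTravelingWave c V u) {l : Filter ℝ} [l.NeBot]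
    (hmod : Tendsto (fun x => 1 - ‖u x‖ ^ 2) l (𝓝 0)) (hderiv : Tendsto (deriv u) l (𝓝 0))
    (x : ℝ) : massCurrent u x = c / 2 * (1 - ‖u x‖ ^ 2) := by
  set J : ℝ → ℝ := fun y => massCurrent u y - c / 2 * (1 - ‖u y‖ ^ 2)
  have hJ_const (y : ℝ) : J y = J x :=
    is_const_of_deriv_eq_zero (fun z => (hu.hasDerivAt_massCurrent_sub z).differentiableAt)
      (fun z => (hu.hasDerivAt_massCurrent_sub z).deriv) y x
  have hnorm : Tendsto (fun y => ‖u y‖) l (𝓝 1) := by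
    simpa using (hmod.const_sub 1).sqrt
  have hJ_tendsto : Tendsto J l (𝓝 0) := by
    simpa using (tendsto_massCurrent_zero hnorm hderiv).sub (hmod.const_mul (c / 2))
  have hJ_zero : J x = 0 :=
    tendsto_nhds_unique (tendsto_const_nhds.congr fun y => (hJ_const y).symm) hJ_tendsto
  exact sub_eq_zero.1 hJ_zero

theorem massCurrent_eq_of_memLp (hu : IsTravelingWave c V u) {p q : ℝ≥0∞}
    (hp : p ≠ 0) (hp' : p ≠ ∞) (hq : q ≠ 0) (hq' : q ≠ ∞)
    (hderiv : MemLp (deriv u) p) (hmod : MemLp (fun x => 1 - ‖u x‖ ^ 2) q) (x : ℝ) :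
    massCurrent u x = c / 2 * (1 - ‖u x‖ ^ 2) :=
  have := neBot_cofinite_of_measure_univ_eq_top Real.volume_univ
  hu.massCurrent_eq_of_tendsto (tendsto_cofinite_zero_of_memLp hmod hq hq')
    (tendsto_cofinite_zero_of_memLp hderiv hp hp') x

end IsTravelingWave

theorem darkSoliton_ne_zero_general {c : ℝ} {V : ℝ → ℝ} {u : ℝ → ℂ} (hu : IsTravelingWave c V u)
    (hc : c ≠ 0) {p q : ℝ≥0∞} (hp : p ≠ 0) (hp' : p ≠ ∞) (hq : q ≠ 0) (hq' : q ≠ ∞)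
    (hderiv : MemLp (deriv u) p) (hmod : MemLp (fun x => 1 - ‖u x‖ ^ 2) q) (x : ℝ) :
    u x ≠ 0 := by
  intro hx
  have hzero : (0 : ℝ) = c / 2 := by
    simpa [massCurrent, hx] using hu.massCurrent_eq_of_memLp hp hp' hq hq' hderiv hmod x
  exact hc (by linarith)

/-- If `W ∈ L¹(ℝ)` is even, `c > 0`, and `u : ℝ → ℂ` is a bounded smooth finite-energy
solution of the nonlocal traveling-wave equation
`i c u' + u'' + (W ⋆ (1 - |u|²)) u = 0`, then `u` never vanishes. -/
theorem darkSoliton_ne_zero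
    (W : ℝ → ℝ) (hW_int : Integrable W) (hW_even : ∀ x, W (-x) = W x)
    (c : ℝ) (hc : 0 < c)
    (u : ℝ → ℂ) (hu_smooth : ContDiff ℝ (⊤ : ℕ∞) u)
    (hu_bdd : ∃ M : ℝ, ∀ x, ‖u x‖ ≤ M)
    (hu_deriv : MemLp (deriv u) 2 (volume : Measure ℝ))
    (hu_mod : MemLp (fun x : ℝ => 1 - ‖u x‖ ^ 2) 2 (volume : Measure ℝ))
    (heq : ∀ x : ℝ,
      Complex.I * (c : ℂ) * deriv u x + deriv (deriv u) x +
        (((∫ t : ℝ, W t * (1 - ‖u (x - t)‖ ^ 2)) : ℝ) : ℂ) * u x = 0) :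
    ∀ x : ℝ, u x ≠ 0 := by
  have htw : IsTravelingWave c (fun x => ∫ t : ℝ, W t * (1 - ‖u (x - t)‖ ^ 2)) u :=
    ⟨hu_smooth.differentiable (by simp),
      (contDiff_infty_iff_deriv.1 hu_smooth).2.differentiable (by simp), heq⟩
  exact darkSoliton_ne_zero_general htw hc.ne' two_ne_zero ENNReal.ofNat_ne_top two_ne_zero
    ENNReal.ofNat_ne_top hu_deriv hu_mod
end

section
/- Let W ∈ L¹(ℝ, ℝ) be an even function, let c > 0, and let u : ℝ → ℂ be a bounded smooth (C^∞) function with u' ∈ L²(ℝ) and 1 − |u|² ∈ L²(ℝ) satisfying i·c·u'(x) + u''(x) + (W ⋆ (1 − |u|²))(x)·u(x) = 0 for all x ∈ ℝ. Then there exist smooth real-valued functions θ and η on ℝ with η(x) < 1 for all x ∈ ℝ, such that u(x) = √(1 − η(x))·e^{i θ(x)} for all x ∈ ℝ, θ' ∈ H^k(ℝ) and η ∈ H^k(ℝ) for every k ∈ ℕ, |u(x)| → 1 as x → ±∞, and for every j ≥ 1 the j-th derivatives u^{(j)}(x), θ^{(j)}(x), η^{(j)}(x) tend to 0 as x → ±∞.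 -/
/-!
Let `η = 1 - |u|²`. Since the potential `W ⋆ η` is real, it drops out of the derivative of the
momentum density: `(Im (ū u'))' = -c Re (ū u') = (c / 2) η'`. So `Im (ū u') - (c / 2) η` is a
constant, and it vanishes because it is square integrable. As `c ≠ 0`, a zero of `u` would force
`c / 2 = 0`, hence `u = |u| e^{iθ}` with `θ' = Im (u' / u) = (c / 2) η / |u|²`.

Convolution with `W ∈ L¹` preserves every `Hⁿ(ℝ)`, so the equation bootstraps `u' ∈ Hⁿ` to
`u'' ∈ Hⁿ`, and `η`, `θ'` inherit this regularity. An `H¹` function on the line vanishes at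
infinity, which gives the limits and the bounds on `u` and `1 / |u|²`.
-/

open MeasureTheory Filter

open Set
open scoped ENNReal Topology Convolution InnerProductSpace

section Boundedness

variable {X E : Type*} [TopologicalSpace X] [NormedAddCommGroup E] {f : X → E}

theorem bddAbove_range_norm_of_tendsto_cocompact {y : E} (hf : Continuous f)
    (hlim : Tendsto f (cocompact X) (𝓝 y)) : BddAbove (range fun x ↦ ‖f x‖) := by
  obtain ⟨C, hC⟩ := (hlim.isCompact_insert_range_of_cocompact hf).isBounded.exists_norm_le
  exact ⟨C, forall_mem_range.2 fun x ↦ hC _ (mem_insert_of_mem _ (mem_range_self x))⟩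

theorem memLp_top_iff_bddAbove_range_norm [MeasurableSpace X] [OpensMeasurableSpace X]
    [SecondCountableTopologyEither X E] {μ : Measure X} [μ.IsOpenPosMeasure]
    (hf : Continuous f) : MemLp f ∞ μ ↔ BddAbove (range fun x ↦ ‖f x‖) := by
  constructor
  · intro h
    have hae : ∀ᵐ x ∂μ, ‖f x‖ ≤ (eLpNorm f ∞ μ).toReal := by
      filter_upwards [ae_le_eLpNormEssSup (f := f) (μ := μ)] with x hx
      rw [← eLpNorm_exponent_top] at hx
      simpa using ENNReal.toReal_mono h.eLpNorm_ne_top hx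
    refine ⟨(eLpNorm f ∞ μ).toReal, forall_mem_range.2 fun x ↦ ?_⟩
    exact (isClosed_le hf.norm continuous_const).closure_subset (μ.dense_of_ae hae x)
  · rintro ⟨C, hC⟩
    exact memLp_top_of_bound hf.aestronglyMeasurable C
      (.of_forall fun x ↦ hC (mem_range_self x))

end Boundedness

section Young

theorem lintegral_mul_rpow_le {α : Type*} [MeasurableSpace α] {μ : Measure α} {f g : α → ℝ≥0∞}
    (hf : AEMeasurable f μ) (hg : AEMeasurable g μ) {p : ℝ} (hp : 1 ≤ p) :
    (∫⁻ x, f x * g x ∂μ) ^ p ≤ (∫⁻ x, f x ∂μ) ^ (p - 1) * ∫⁻ x, f x * g x ^ p ∂μ := by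
  have hp0 : 0 < p := one_pos.trans_le hp
  have hinv : 0 ≤ 1 - p⁻¹ := sub_nonneg.2 (inv_le_one_of_one_le₀ hp)
  have hsplit (x : α) : f x * g x = f x ^ (1 - p⁻¹) * (f x * g x ^ p) ^ p⁻¹ := by
    rw [ENNReal.mul_rpow_of_nonneg _ _ (inv_nonneg.2 hp0.le), ← ENNReal.rpow_mul,
      mul_inv_cancel₀ hp0.ne', ENNReal.rpow_one, ← mul_assoc,
      ← ENNReal.rpow_add_of_nonneg _ _ hinv (inv_nonneg.2 hp0.le), sub_add_cancel,
      ENNReal.rpow_one]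
  calc
    (∫⁻ x, f x * g x ∂μ) ^ p
      ≤ ((∫⁻ x, f x ∂μ) ^ (1 - p⁻¹) * (∫⁻ x, f x * g x ^ p ∂μ) ^ p⁻¹) ^ p := by
        simp_rw [hsplit]
        gcongr
        exact ENNReal.lintegral_mul_norm_pow_le hf (hf.mul (hg.pow_const p)) hinv
          (inv_nonneg.2 hp0.le) (sub_add_cancel _ _)
    _ = (∫⁻ x, f x ∂μ) ^ (p - 1) * ∫⁻ x, f x * g x ^ p ∂μ := by
        rw [ENNReal.mul_rpow_of_nonneg _ _ hp0.le, ← ENNReal.rpow_mul, ← ENNReal.rpow_mul,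
          inv_mul_cancel₀ hp0.ne', ENNReal.rpow_one, sub_mul, inv_mul_cancel₀ hp0.ne', one_mul]

variable {G : Type*} [AddGroup G] [MeasurableSpace G] [MeasurableAdd₂ G] [MeasurableNeg G]
  {μ : Measure G} [SFinite μ] [μ.IsAddRightInvariant]

theorem lintegral_lintegral_mul_sub_rpow_le {f g : G → ℝ≥0∞} (hf : AEMeasurable f μ)
    (hg : AEMeasurable g μ) {p : ℝ} (hp : 1 ≤ p) :
    ∫⁻ x, (∫⁻ t, f t * g (x - t) ∂μ) ^ p ∂μ ≤ (∫⁻ t, f t ∂μ) ^ p * ∫⁻ x, g x ^ p ∂μ := by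
  have hsub := quasiMeasurePreserving_sub_of_right_invariant μ μ
  have hshift (x : G) : AEMeasurable (fun t ↦ g (x - t)) μ :=
    hg.comp_quasiMeasurePreserving (quasiMeasurePreserving_sub_left_of_right_invariant μ x)
  have hpow (t : G) : AEMeasurable (fun x ↦ g (x - t) ^ p) μ :=
    (hg.pow_const p).comp_quasiMeasurePreserving
      (measurePreserving_sub_right μ t).quasiMeasurePreserving
  have hmeas : AEMeasurable (fun z : G × G ↦ f z.2 * g (z.1 - z.2) ^ p) (μ.prod μ) :=
    hf.comp_snd.mul ((hg.comp_quasiMeasurePreserving hsub).pow_const p)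
  calc
    ∫⁻ x, (∫⁻ t, f t * g (x - t) ∂μ) ^ p ∂μ
      ≤ ∫⁻ x, (∫⁻ t, f t ∂μ) ^ (p - 1) * ∫⁻ t, f t * g (x - t) ^ p ∂μ ∂μ :=
        lintegral_mono fun x ↦ lintegral_mul_rpow_le hf (hshift x) hp
    _ = (∫⁻ t, f t ∂μ) ^ (p - 1) * ∫⁻ t, ∫⁻ x, f t * g (x - t) ^ p ∂μ ∂μ := by
        rw [lintegral_const_mul'' _ hmeas.lintegral_prod_right', lintegral_lintegral_swap hmeas]
    _ = (∫⁻ t, f t ∂μ) ^ (p - 1) * ((∫⁻ t, f t ∂μ) * ∫⁻ x, g x ^ p ∂μ) := by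
        rw [← lintegral_mul_const'' _ hf]
        congr 2 with t
        rw [lintegral_const_mul'' _ (hpow t), lintegral_sub_right_eq_self (fun x ↦ g x ^ p) t]
    _ = (∫⁻ t, f t ∂μ) ^ p * ∫⁻ x, g x ^ p ∂μ := by
        conv_lhs => rw [← mul_assoc, ← ENNReal.rpow_one (∫⁻ t, f t ∂μ), ← ENNReal.rpow_mul, one_mul,
          ← ENNReal.rpow_add_of_nonneg _ _ (sub_nonneg.2 hp) zero_le_one, sub_add_cancel]

theorem memLp_convolution {E E' F : Type*} [NormedAddCommGroup E] [NormedSpace ℝ E]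
    [NormedAddCommGroup E'] [NormedSpace ℝ E'] [NormedAddCommGroup F] [NormedSpace ℝ F]
    (L : E →L[ℝ] E' →L[ℝ] F) {f : G → E} {g : G → E'} {p : ℝ≥0∞} (hf : Integrable f μ)
    (hg : MemLp g p μ) (hp : 1 ≤ p) (hp' : p ≠ ∞) : MemLp (f ⋆[L, μ] g) p μ := by
  have hp0 : p ≠ 0 := (one_pos.trans_le hp).ne'
  have hpr : 1 ≤ p.toReal := by simpa using ENNReal.toReal_mono hp' hp
  have hmeas : AEStronglyMeasurable (f ⋆[L, μ] g) μ :=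
    (hf.1.convolution_integrand L hg.1).integral_prod_right'
  have hpointwise (x : G) :
      ‖(f ⋆[L, μ] g) x‖ₑ ≤ ∫⁻ t, (‖L‖ₑ * ‖f t‖ₑ) * ‖g (x - t)‖ₑ ∂μ :=
    (enorm_integral_le_lintegral_enorm _).trans (lintegral_mono fun t ↦ L.le_opENorm₂ _ _)
  refine ⟨hmeas, (eLpNorm_lt_top_iff_lintegral_rpow_enorm_lt_top hp0 hp').2 ?_⟩
  calc
    ∫⁻ x, ‖(f ⋆[L, μ] g) x‖ₑ ^ p.toReal ∂μ
      ≤ ∫⁻ x, (∫⁻ t, (‖L‖ₑ * ‖f t‖ₑ) * ‖g (x - t)‖ₑ ∂μ) ^ p.toReal ∂μ := by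
        gcongr with x
        exact hpointwise x
    _ ≤ (∫⁻ t, ‖L‖ₑ * ‖f t‖ₑ ∂μ) ^ p.toReal * ∫⁻ x, ‖g x‖ₑ ^ p.toReal ∂μ :=
        lintegral_lintegral_mul_sub_rpow_le (hf.1.enorm.const_mul _) hg.1.enorm hpr
    _ < ∞ := by
        rw [lintegral_const_mul'' _ hf.1.enorm]
        have hf' := hf.2.ne
        have hg' := lintegral_rpow_enorm_lt_top_of_eLpNorm_lt_top hp0 hp' hg.2
        exact ENNReal.mul_lt_top (ENNReal.rpow_lt_top_of_nonneg (zero_le_one.trans hpr)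
          (ENNReal.mul_ne_top enorm_ne_top hf')) hg'

end Young

section ConvolutionDerivative

variable {E E' F : Type*} [NormedAddCommGroup E] [NormedSpace ℝ E]
  [NormedAddCommGroup E'] [NormedSpace ℝ E'] [NormedAddCommGroup F] [NormedSpace ℝ F]
  (L : E →L[ℝ] E' →L[ℝ] F) {f : ℝ → E} {g : ℝ → E'}

theorem convolutionExists_of_bddAbove (hf : Integrable f) (hg : Continuous g)
    (hgb : BddAbove (range fun x ↦ ‖g x‖)) : ConvolutionExists f g L :=
  fun _ ↦ (hgb.mono (image_subset_range _ _)).convolutionExistsAt L (s := univ) .univ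
    (subset_univ _) hf.integrableOn hg.aestronglyMeasurable

theorem hasDerivAt_convolution_of_bddAbove (hf : Integrable f) (hg : Differentiable ℝ g)
    (hgb : BddAbove (range fun x ↦ ‖g x‖)) (hg' : Continuous (deriv g))
    (hgb' : BddAbove (range fun x ↦ ‖deriv g x‖)) (x : ℝ) :
    HasDerivAt (f ⋆[L] g) ((f ⋆[L] deriv g) x) x := by
  have hexists := convolutionExists_of_bddAbove L hf hg.continuous hgb
  have hexists' := convolutionExists_of_bddAbove L hf hg' hgb'
  obtain ⟨C, hC⟩ := hgb'
  have hdom (t y : ℝ) : ‖L (f t) (deriv g (y - t))‖ ≤ ‖L‖ * ‖f t‖ * C :=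
    L.le_of_opNorm₂_le_of_le le_rfl le_rfl (hC (mem_range_self (y - t)))
  have hderiv (t y : ℝ) :
      HasDerivAt (fun y ↦ L (f t) (g (y - t))) (L (f t) (deriv g (y - t))) y :=
    (L (f t)).hasFDerivAt.comp_hasDerivAt y ((hg (y - t)).hasDerivAt.comp_sub_const y t)
  exact (hasDerivAt_integral_of_dominated_loc_of_deriv_le (univ_mem (f := 𝓝 x))
    (.of_forall fun y ↦ (hexists y).aestronglyMeasurable) (hexists x) (hexists' x).1
    (.of_forall fun t y _ ↦ hdom t y) ((hf.norm.const_mul _).mul_const C)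
    (.of_forall fun t y _ ↦ hderiv t y)).2

end ConvolutionDerivative

/-- The classical Sobolev condition on the line: `f` is `n` times continuously differentiable and
its derivatives up to order `n` lie in `Lᵖ`. For `p = 2` this says that the `Cⁿ` function `f` is in
`Hⁿ(ℝ)`; for `p = ∞`, that it has bounded derivatives up to order `n`. -/
structure ContDiffMemLp {E : Type*} [NormedAddCommGroup E] [NormedSpace ℝ E] (n : ℕ) (p : ℝ≥0∞)
    (f : ℝ → E) : Prop where
  contDiff : ContDiff ℝ n f
  memLp_iteratedDeriv : ∀ k ≤ n, MemLp (iteratedDeriv k f) p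

namespace ContDiffMemLp

section Basic

variable {E F G : Type*} [NormedAddCommGroup E] [NormedSpace ℝ E] [NormedAddCommGroup F]
  [NormedSpace ℝ F] [NormedAddCommGroup G] [NormedSpace ℝ G]
  {n m : ℕ} {p q r : ℝ≥0∞} {f f' g : ℝ → E}

theorem memLp (hf : ContDiffMemLp n p f) : MemLp f p := by
  simpa using hf.memLp_iteratedDeriv 0 n.zero_le

theorem of_le (hf : ContDiffMemLp n p f) (hmn : m ≤ n) : ContDiffMemLp m p f :=
  ⟨hf.contDiff.of_le (mod_cast hmn), fun k hk ↦ hf.memLp_iteratedDeriv k (hk.trans hmn)⟩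

theorem zero_iff : ContDiffMemLp 0 p f ↔ Continuous f ∧ MemLp f p :=
  ⟨fun hf ↦ ⟨hf.contDiff.continuous, hf.memLp⟩,
    fun hf ↦ ⟨contDiff_zero.2 hf.1, fun k hk ↦ by simpa [Nat.le_zero.1 hk] using hf.2⟩⟩

theorem succ_iff : ContDiffMemLp (n + 1) p f ↔
    Differentiable ℝ f ∧ MemLp f p ∧ ContDiffMemLp n p (deriv f) := by
  constructor
  · intro hf
    have hdiff := contDiff_succ_iff_deriv.1 (mod_cast hf.contDiff : ContDiff ℝ ((n : ℕ∞) + 1) f)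
    exact ⟨hdiff.1, hf.memLp, hdiff.2.2, fun k hk ↦ by
      simpa [iteratedDeriv_succ'] using hf.memLp_iteratedDeriv (k + 1) (by lia)⟩
  · rintro ⟨hdiff, hp, hf'⟩
    refine ⟨mod_cast contDiff_succ_iff_deriv.2 ⟨hdiff, by simp, hf'.contDiff⟩, ?_⟩
    rintro (_ | k) hk
    · simpa using hp
    · simpa [iteratedDeriv_succ'] using hf'.memLp_iteratedDeriv k (by lia)

theorem succ_of_hasDerivAt (hp : MemLp f p) (hderiv : ∀ x, HasDerivAt f (f' x) x)
    (hf' : ContDiffMemLp n p f') : ContDiffMemLp (n + 1) p f :=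
  succ_iff.2 ⟨fun x ↦ (hderiv x).differentiableAt, hp, (funext fun x ↦ (hderiv x).deriv) ▸ hf'⟩

theorem contDiff_infty_of_deriv (hdiff : Differentiable ℝ f)
    (hf' : ∀ n, ContDiffMemLp n p (deriv f)) : ContDiff ℝ (⊤ : ℕ∞) f :=
  contDiff_infty_iff_deriv.2 ⟨hdiff, contDiff_infty.2 fun n ↦ (hf' n).contDiff⟩

theorem clm_comp (A : E →L[ℝ] F) (hf : ContDiffMemLp n p f) :
    ContDiffMemLp n p (fun x ↦ A (f x)) := by
  induction n generalizing f with
  | zero =>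
    exact zero_iff.2 ⟨A.continuous.comp hf.contDiff.continuous, A.comp_memLp' hf.memLp⟩
  | succ n ih =>
    have ⟨hdiff, hp, hf'⟩ := succ_iff.1 hf
    exact succ_of_hasDerivAt (A.comp_memLp' hp)
      (fun x ↦ A.hasFDerivAt.comp_hasDerivAt x (hdiff x).hasDerivAt) (ih hf')

theorem add (hf : ContDiffMemLp n p f) (hg : ContDiffMemLp n p g) :
    ContDiffMemLp n p (fun x ↦ f x + g x) := by
  induction n generalizing f g with
  | zero =>
    exact zero_iff.2
      ⟨hf.contDiff.continuous.add hg.contDiff.continuous, hf.memLp.add hg.memLp⟩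
  | succ n ih =>
    have ⟨hdiff, hp, hf'⟩ := succ_iff.1 hf
    have ⟨hdiff', hp', hg'⟩ := succ_iff.1 hg
    exact succ_of_hasDerivAt (hp.add hp')
      (fun x ↦ (hdiff x).hasDerivAt.add (hdiff' x).hasDerivAt) (ih hf' hg')

theorem bilin [p.HolderTriple q r] (B : E →L[ℝ] F →L[ℝ] G) {g : ℝ → F}
    (hf : ContDiffMemLp n p f) (hg : ContDiffMemLp n q g) :
    ContDiffMemLp n r (fun x ↦ B (f x) (g x)) := by
  induction n generalizing f g with
  | zero =>
    exact zero_iff.2 ⟨B.continuous₂.comp₂ hf.contDiff.continuous hg.contDiff.continuous,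
      B.memLp_of_bilin r hf.memLp hg.memLp⟩
  | succ n ih =>
    have ⟨hdiff, hp, hf'⟩ := succ_iff.1 hf
    have ⟨hdiff', hq, hg'⟩ := succ_iff.1 hg
    exact succ_of_hasDerivAt (B.memLp_of_bilin r hp hq)
      (fun x ↦ B.hasDerivAt_of_bilinear (fun _ ↦ (hdiff x).hasDerivAt)
        fun _ ↦ (hdiff' x).hasDerivAt)
      ((ih (hf.of_le n.le_succ) hg').add (ih hf' (hg.of_le n.le_succ)))

theorem inv {𝕜 : Type*} [NontriviallyNormedField 𝕜] [NormedAlgebra ℝ 𝕜] {f : ℝ → 𝕜}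
    (hf : ContDiffMemLp n ∞ f) (hne : ∀ x, f x ≠ 0) (hinv : MemLp (fun x ↦ (f x)⁻¹) ∞) :
    ContDiffMemLp n ∞ (fun x ↦ (f x)⁻¹) := by
  induction n with
  | zero => exact zero_iff.2 ⟨hf.contDiff.continuous.inv₀ hne, hinv⟩
  | succ n ih =>
    have ⟨hdiff, _, hf'⟩ := succ_iff.1 hf
    have hinv' := ih (hf.of_le n.le_succ)
    have hmul {g h : ℝ → 𝕜} (hg : ContDiffMemLp n ∞ g) (hh : ContDiffMemLp n ∞ h) :
        ContDiffMemLp n ∞ (fun x ↦ g x * h x) := hg.bilin (.mul ℝ 𝕜) hh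
    exact succ_of_hasDerivAt hinv
      (fun x ↦ ((hdiff x).hasDerivAt.fun_inv (hne x)).congr_deriv (by simp [div_eq_mul_inv, sq]))
      ((hmul hf' (hmul hinv' hinv')).clm_comp (-.id ℝ 𝕜))

theorem convolution (L : E →L[ℝ] F →L[ℝ] G) {g : ℝ → F} (hf : Integrable f)
    (hg : ContDiffMemLp n p g) (hg' : ContDiffMemLp n ∞ g) (hp : 1 ≤ p) (hp' : p ≠ ∞) :
    ContDiffMemLp n p (f ⋆[L] g) := by
  have hbdd {h : ℝ → F} (hh : ContDiffMemLp 0 ∞ h) : BddAbove (range fun x ↦ ‖h x‖) :=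
    (memLp_top_iff_bddAbove_range_norm hh.contDiff.continuous).1 hh.memLp
  induction n generalizing g with
  | zero =>
    exact zero_iff.2 ⟨(hbdd hg').continuous_convolution_right_of_integrable L hf
      hg.contDiff.continuous, memLp_convolution L hf hg.memLp hp hp'⟩
  | succ n ih =>
    have ⟨hdiff, hgp, hderiv⟩ := succ_iff.1 hg
    have ⟨_, _, hderiv'⟩ := succ_iff.1 hg'
    exact succ_of_hasDerivAt (memLp_convolution L hf hgp hp hp')
      (hasDerivAt_convolution_of_bddAbove L hf hdiff (hbdd (hg'.of_le (Nat.zero_le _)))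
        hderiv.contDiff.continuous (hbdd (hderiv'.of_le (Nat.zero_le _))))
      (ih hderiv hderiv')

end Basic

section Decay

variable {E : Type*} [NormedAddCommGroup E] [InnerProductSpace ℝ E] {f : ℝ → E} {n k : ℕ}

theorem tendsto_cocompact (hf : ContDiffMemLp 1 2 f) : Tendsto f (cocompact ℝ) (𝓝 0) := by
  have ⟨hdiff, hp, hf'⟩ := succ_iff.1 hf
  have hderiv (x : ℝ) : HasDerivAt (fun x ↦ ‖f x‖ ^ 2) (2 * ⟪f x, deriv f x⟫_ℝ) x :=
    (hdiff x).hasDerivAt.norm_sq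
  have hint : Integrable (fun x ↦ ‖f x‖ ^ 2) := (memLp_two_iff_integrable_sq_norm hp.1).1 hp
  have hint' : Integrable (fun x ↦ 2 * ⟪f x, deriv f x⟫_ℝ) :=
    (memLp_one_iff_integrable.1 ((innerSL ℝ).memLp_of_bilin 1 hp hf'.memLp)).const_mul 2
  have hsq : Tendsto (fun x ↦ ‖f x‖ ^ 2) (cocompact ℝ) (𝓝 0) := by
    rw [cocompact_eq_atBot_atTop, tendsto_sup]
    exact ⟨tendsto_zero_of_hasDerivAt_of_integrableOn_Iic (a := 0) (fun x _ ↦ hderiv x)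
        hint'.integrableOn hint.integrableOn,
      tendsto_zero_of_hasDerivAt_of_integrableOn_Ioi (a := 0) (fun x _ ↦ hderiv x)
        hint'.integrableOn hint.integrableOn⟩
  refine tendsto_zero_iff_norm_tendsto_zero.2 ?_
  simpa using hsq.sqrt

theorem tendsto_iteratedDeriv_cocompact (hf : ContDiffMemLp n 2 f) (hk : k < n) :
    Tendsto (iteratedDeriv k f) (cocompact ℝ) (𝓝 0) := by
  refine tendsto_cocompact (succ_iff.2 ⟨hf.contDiff.differentiable_iteratedDeriv k (mod_cast hk),
    hf.memLp_iteratedDeriv k hk.le, zero_iff.2 ?_⟩)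
  rw [← iteratedDeriv_succ]
  exact ⟨hf.contDiff.continuous_iteratedDeriv (k + 1) (mod_cast hk),
    hf.memLp_iteratedDeriv (k + 1) hk⟩

theorem tendsto_iteratedDeriv_atTop (hf : ContDiffMemLp (k + 1) 2 f) :
    Tendsto (iteratedDeriv k f) atTop (𝓝 0) :=
  (hf.tendsto_iteratedDeriv_cocompact k.lt_succ_self).mono_left atTop_le_cocompact

theorem tendsto_iteratedDeriv_atBot (hf : ContDiffMemLp (k + 1) 2 f) :
    Tendsto (iteratedDeriv k f) atBot (𝓝 0) :=
  (hf.tendsto_iteratedDeriv_cocompact k.lt_succ_self).mono_left atBot_le_cocompact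

theorem top_of_succ_two (hf : ContDiffMemLp (n + 1) 2 f) : ContDiffMemLp n ∞ f := by
  refine ⟨hf.contDiff.of_le (by simp), fun k hk ↦ ?_⟩
  have hcont := hf.contDiff.continuous_iteratedDeriv k (mod_cast hk.trans n.le_succ)
  exact (memLp_top_iff_bddAbove_range_norm hcont).2
    (bddAbove_range_norm_of_tendsto_cocompact hcont
      (hf.tendsto_iteratedDeriv_cocompact (Nat.lt_succ_of_le hk)))

theorem top_of_deriv_two (hdiff : Differentiable ℝ f) (hf : MemLp f ∞)
    (hf' : ContDiffMemLp n 2 (deriv f)) : ContDiffMemLp n ∞ f := by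
  cases n with
  | zero => exact zero_iff.2 ⟨hdiff.continuous, hf⟩
  | succ n => exact succ_iff.2 ⟨hdiff, hf, hf'.top_of_succ_two⟩

theorem one_sub_norm_sq (hη : MemLp (fun x ↦ 1 - ‖f x‖ ^ 2) 2) (hdiff : Differentiable ℝ f)
    (hf : ContDiffMemLp n ∞ f) (hf' : ContDiffMemLp n 2 (deriv f)) :
    ContDiffMemLp (n + 1) 2 (fun x ↦ 1 - ‖f x‖ ^ 2) :=
  succ_of_hasDerivAt hη
    (fun x ↦ ((hdiff x).hasDerivAt.norm_sq.const_sub 1).congr_deriv (neg_mul _ _).symm)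
    (hf.bilin (-(2 : ℝ) • innerSL ℝ) hf')

end Decay

end ContDiffMemLp

section ModulusBound

theorem abs_sqrt_one_add_sq_sub_sqrt_two_le (r : ℝ) : |√(1 + r ^ 2) - √2| ≤ |1 - r ^ 2| := by
  have hfactor : (√(1 + r ^ 2) - √2) * (√(1 + r ^ 2) + √2) = -(1 - r ^ 2) := by
    rw [mul_comm, ← sq_sub_sq, Real.sq_sqrt (by positivity), Real.sq_sqrt zero_le_two]
    ring
  have hone : 1 ≤ √(1 + r ^ 2) + √2 := by
    linarith [Real.sqrt_nonneg (1 + r ^ 2), Real.one_le_sqrt.2 one_le_two]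
  rw [← abs_neg (1 - r ^ 2), ← hfactor, abs_mul]
  exact le_mul_of_one_le_right (abs_nonneg _) (hone.trans (le_abs_self _))

variable {E : Type*} [NormedAddCommGroup E] [InnerProductSpace ℝ E]

theorem abs_inner_div_sqrt_one_add_norm_sq_le (v w : E) :
    |⟪v, w⟫_ℝ / √(1 + ‖v‖ ^ 2)| ≤ ‖w‖ := by
  have hpos : 0 < √(1 + ‖v‖ ^ 2) := by positivity
  rw [abs_div, abs_of_pos hpos, div_le_iff₀' hpos]
  calc
    |⟪v, w⟫_ℝ| ≤ ‖v‖ * ‖w‖ := abs_real_inner_le_norm v w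
    _ ≤ √(1 + ‖v‖ ^ 2) * ‖w‖ := by
      gcongr
      exact Real.le_sqrt_of_sq_le (by simp)

theorem bddAbove_range_norm_of_memLp_one_sub_norm_sq {u : ℝ → E} (hu : ContDiff ℝ 1 u)
    (hu' : MemLp (deriv u) 2) (hη : MemLp (fun x ↦ 1 - ‖u x‖ ^ 2) 2) :
    BddAbove (range fun x ↦ ‖u x‖) := by
  -- `√(1 + ‖u‖ ^ 2)` is a smooth substitute for `‖u‖` which differs from `√2` by an `H¹` function.
  set h : ℝ → ℝ := fun x ↦ √(1 + ‖u x‖ ^ 2) - √2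
  set h' : ℝ → ℝ := fun x ↦ ⟪u x, deriv u x⟫_ℝ / √(1 + ‖u x‖ ^ 2)
  have hderiv (x : ℝ) : HasDerivAt h (h' x) x :=
    ((((hu.differentiable one_ne_zero x).hasDerivAt.norm_sq.const_add 1).sqrt
      (by positivity)).sub_const _).congr_deriv (mul_div_mul_left _ _ two_ne_zero)
  have hcont : Continuous h := continuous_iff_continuousAt.2 fun x ↦ (hderiv x).continuousAt
  have hcont' : Continuous h' := (hu.continuous.inner hu.continuous_deriv_one).div
    (by fun_prop) fun x ↦ by positivity
  have hsobolev : ContDiffMemLp 1 2 h :=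
    .succ_of_hasDerivAt (hη.mono hcont.aestronglyMeasurable
        (.of_forall fun x ↦ abs_sqrt_one_add_sq_sub_sqrt_two_le ‖u x‖)) hderiv
      (ContDiffMemLp.zero_iff.2 ⟨hcont', hu'.mono hcont'.aestronglyMeasurable
        (.of_forall fun x ↦ abs_inner_div_sqrt_one_add_norm_sq_le (u x) (deriv u x))⟩)
  obtain ⟨C, hC⟩ := bddAbove_range_norm_of_tendsto_cocompact hcont hsobolev.tendsto_cocompact
  refine ⟨C + √2, forall_mem_range.2 fun x ↦ ?_⟩
  calc
    ‖u x‖ ≤ √(1 + ‖u x‖ ^ 2) := Real.le_sqrt_of_sq_le (by simp)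
    _ ≤ C + √2 := sub_le_iff_le_add.1 ((le_abs_self _).trans (hC (mem_range_self x)))

end ModulusBound

section Lifting

theorem im_div_eq_inner_I_mul (w z : ℂ) :
    (w / z).im = ⟪Complex.I * z, w⟫_ℝ / ‖z‖ ^ 2 := by
  rw [Complex.div_im, ← Complex.normSq_eq_norm_sq, ← sub_div]
  simp [Complex.inner]

variable {u : ℝ → ℂ}

theorem exists_hasDerivAt_logDeriv_exp_eq (hu : ContDiff ℝ 1 u) (hne : ∀ x, u x ≠ 0) :
    ∃ L : ℝ → ℂ, (∀ x, HasDerivAt L (logDeriv u x) x) ∧ ∀ x, Complex.exp (L x) = u x := by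
  have hcont : Continuous (logDeriv u) := hu.continuous_deriv_one.div hu.continuous hne
  set L : ℝ → ℂ := fun x ↦ Complex.log (u 0) + ∫ t in 0..x, logDeriv u t
  have hL (x : ℝ) : HasDerivAt L (logDeriv u x) x :=
    (hcont.integral_hasStrictDerivAt 0 x).hasDerivAt.const_add _
  have hquot (x : ℝ) : HasDerivAt (fun x ↦ Complex.exp (-L x) * u x) 0 x := by
    refine ((hL x).fun_neg.cexp.mul (hu.differentiable one_ne_zero x).hasDerivAt).congr_deriv ?_
    rw [logDeriv_apply]
    field_simp [hne x]
    ring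
  refine ⟨L, hL, fun x ↦ ?_⟩
  have hconst : Complex.exp (-L x) * u x = Complex.exp (-L 0) * u 0 :=
    is_const_of_deriv_eq_zero (fun x ↦ (hquot x).differentiableAt) (fun x ↦ (hquot x).deriv) x 0
  have hone : Complex.exp (-L 0) * u 0 = 1 := by
    simp [L, Complex.exp_neg, Complex.exp_log (hne 0), hne 0]
  rw [hone, Complex.exp_neg, inv_mul_eq_one₀ (Complex.exp_ne_zero _)] at hconst
  exact hconst

theorem exists_hasDerivAt_im_logDeriv_eq_norm_mul_exp (hu : ContDiff ℝ 1 u)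
    (hne : ∀ x, u x ≠ 0) :
    ∃ θ : ℝ → ℝ, (∀ x, HasDerivAt θ (logDeriv u x).im x) ∧
      ∀ x, u x = ‖u x‖ * Complex.exp (Complex.I * θ x) := by
  obtain ⟨L, hL, hexp⟩ := exists_hasDerivAt_logDeriv_exp_eq hu hne
  refine ⟨fun x ↦ (L x).im, fun x ↦ Complex.imCLM.hasFDerivAt.comp_hasDerivAt x (hL x),
    fun x ↦ ?_⟩
  rw [← hexp x, Complex.norm_exp, Complex.ofReal_exp, ← Complex.exp_add, mul_comm Complex.I,
    Complex.re_add_im]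

end Lifting

/-- `u` is a finite-energy solution of the nonlocal Gross–Pitaevskii traveling-wave equation
`i c u' + u'' + (W ⋆ (1 - |u|²)) u = 0` on `ℝ`, in the classical sense: `u` is twice
differentiable and the equation holds pointwise. -/
structure IsFiniteEnergyTravelingWave (W : ℝ → ℝ) (c : ℝ) (u : ℝ → ℂ) : Prop where
  differentiable : Differentiable ℝ u
  differentiable_deriv : Differentiable ℝ (deriv u)
  memLp_deriv : MemLp (deriv u) 2
  memLp_one_sub_norm_sq : MemLp (fun x ↦ 1 - ‖u x‖ ^ 2) 2
  eq_zero (x : ℝ) : Complex.I * c * deriv u x + deriv (deriv u) x +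
    ((∫ t, W t * (1 - ‖u (x - t)‖ ^ 2) : ℝ) : ℂ) * u x = 0

namespace IsFiniteEnergyTravelingWave

variable {W : ℝ → ℝ} {c : ℝ} {u : ℝ → ℂ}

theorem contDiff_one (h : IsFiniteEnergyTravelingWave W c u) : ContDiff ℝ 1 u :=
  contDiff_one_iff_deriv.2 ⟨h.differentiable, h.differentiable_deriv.continuous⟩

theorem memLp_top (h : IsFiniteEnergyTravelingWave W c u) : MemLp u ∞ :=
  (memLp_top_iff_bddAbove_range_norm h.differentiable.continuous).2
    (bddAbove_range_norm_of_memLp_one_sub_norm_sq h.contDiff_one h.memLp_deriv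
      h.memLp_one_sub_norm_sq)

section Regularity

theorem deriv_deriv_eq (h : IsFiniteEnergyTravelingWave W c u) (x : ℝ) :
    deriv (deriv u) x = -c • (Complex.I * deriv u x) +
      -((W ⋆ fun y ↦ 1 - ‖u y‖ ^ 2) x • u x) := by
  have hconv : (W ⋆ fun y ↦ 1 - ‖u y‖ ^ 2) x = ∫ t, W t * (1 - ‖u (x - t)‖ ^ 2) := rfl
  rw [hconv, Complex.real_smul, Complex.real_smul, Complex.ofReal_neg]
  linear_combination h.eq_zero x

theorem contDiffMemLp_deriv (h : IsFiniteEnergyTravelingWave W c u) (hW : Integrable W) (n : ℕ) :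
    ContDiffMemLp n 2 (deriv u) := by
  induction n with
  | zero => exact ContDiffMemLp.zero_iff.2 ⟨h.differentiable_deriv.continuous, h.memLp_deriv⟩
  | succ n ih =>
    have hu : ContDiffMemLp n ∞ u := .top_of_deriv_two h.differentiable h.memLp_top ih
    have hη : ContDiffMemLp (n + 1) 2 (fun x ↦ 1 - ‖u x‖ ^ 2) :=
      .one_sub_norm_sq h.memLp_one_sub_norm_sq h.differentiable hu ih
    have hV : ContDiffMemLp n 2 (W ⋆ fun x ↦ 1 - ‖u x‖ ^ 2) :=
      (hη.of_le n.le_succ).convolution _ hW hη.top_of_succ_two one_le_two (by simp)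
    refine ContDiffMemLp.succ_iff.2 ⟨h.differentiable_deriv, h.memLp_deriv, ?_⟩
    rw [funext h.deriv_deriv_eq]
    exact (ih.clm_comp (-c • .mul ℝ ℂ Complex.I)).add (hV.bilin (-.lsmul ℝ ℝ) hu)

theorem contDiffMemLp_top (h : IsFiniteEnergyTravelingWave W c u) (hW : Integrable W) (n : ℕ) :
    ContDiffMemLp n ∞ u :=
  .top_of_deriv_two h.differentiable h.memLp_top (h.contDiffMemLp_deriv hW n)

theorem contDiffMemLp_one_sub_norm_sq (h : IsFiniteEnergyTravelingWave W c u) (hW : Integrable W)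
    (n : ℕ) : ContDiffMemLp n 2 (fun x ↦ 1 - ‖u x‖ ^ 2) :=
  ContDiffMemLp.of_le (.one_sub_norm_sq h.memLp_one_sub_norm_sq h.differentiable
    (h.contDiffMemLp_top hW n) (h.contDiffMemLp_deriv hW n)) n.le_succ

theorem tendsto_norm_sq (h : IsFiniteEnergyTravelingWave W c u) (hW : Integrable W) :
    Tendsto (fun x ↦ ‖u x‖ ^ 2) (cocompact ℝ) (𝓝 1) := by
  simpa using (h.contDiffMemLp_one_sub_norm_sq hW 1).tendsto_cocompact.const_sub 1

theorem tendsto_norm (h : IsFiniteEnergyTravelingWave W c u) (hW : Integrable W) :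
    Tendsto (fun x ↦ ‖u x‖) (cocompact ℝ) (𝓝 1) := by
  simpa using (h.tendsto_norm_sq hW).sqrt

end Regularity

section Momentum

-- `⟪i u, u'⟫` is the momentum density `Im (ū u')`.
theorem hasDerivAt_momentum (h : IsFiniteEnergyTravelingWave W c u) (x : ℝ) :
    HasDerivAt (fun x ↦ ⟪Complex.I * u x, deriv u x⟫_ℝ) (-c * ⟪u x, deriv u x⟫_ℝ) x := by
  have horth (z : ℂ) : ⟪Complex.I * z, z⟫_ℝ = 0 := by
    simp [Complex.inner, mul_comm]
  have hisom (z w : ℂ) : ⟪Complex.I * z, Complex.I * w⟫_ℝ = ⟪z, w⟫_ℝ := by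
    simp [Complex.inner]
  refine (((h.differentiable x).hasDerivAt.const_mul Complex.I).inner ℝ
    (h.differentiable_deriv x).hasDerivAt).congr_deriv ?_
  rw [h.deriv_deriv_eq, inner_add_right, inner_neg_right, real_inner_smul_right,
    real_inner_smul_right, horth, horth, hisom, mul_zero, neg_zero, add_zero, add_zero]

theorem momentum_eq (h : IsFiniteEnergyTravelingWave W c u) (x : ℝ) :
    ⟪Complex.I * u x, deriv u x⟫_ℝ = c / 2 * (1 - ‖u x‖ ^ 2) := by
  set Q : ℝ → ℝ := fun x ↦ ⟪Complex.I * u x, deriv u x⟫_ℝ - c / 2 * (1 - ‖u x‖ ^ 2)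
  have hderiv (x : ℝ) : HasDerivAt Q 0 x :=
    ((h.hasDerivAt_momentum x).sub
      (((h.differentiable x).hasDerivAt.norm_sq.const_sub 1).const_mul (c / 2))).congr_deriv
      (by ring)
  have hconst : Q = fun _ ↦ Q x := funext fun y ↦
    is_const_of_deriv_eq_zero (fun x ↦ (hderiv x).differentiableAt) (fun x ↦ (hderiv x).deriv) y x
  have hQ : MemLp Q 2 :=
    ((innerSL ℝ).memLp_of_bilin 2 (h.memLp_top.const_mul Complex.I) h.memLp_deriv).sub
      (h.memLp_one_sub_norm_sq.const_mul (c / 2))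
  rw [hconst, memLp_const_iff two_ne_zero (by simp)] at hQ
  exact sub_eq_zero.1 (hQ.resolve_right (by simp))

theorem ne_zero (h : IsFiniteEnergyTravelingWave W c u) (hc : c ≠ 0) (x : ℝ) : u x ≠ 0 := by
  intro hx
  exact hc (by simpa [hx] using (h.momentum_eq x).symm)

theorem im_logDeriv (h : IsFiniteEnergyTravelingWave W c u) (x : ℝ) :
    (logDeriv u x).im = c / 2 * ((1 - ‖u x‖ ^ 2) * (‖u x‖ ^ 2)⁻¹) := by
  rw [logDeriv_apply, im_div_eq_inner_I_mul, h.momentum_eq x, div_eq_mul_inv, mul_assoc]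

theorem contDiffMemLp_im_logDeriv (h : IsFiniteEnergyTravelingWave W c u) (hW : Integrable W)
    (hc : c ≠ 0) (n : ℕ) : ContDiffMemLp n 2 (fun x ↦ (logDeriv u x).im) := by
  have hne (x : ℝ) : ‖u x‖ ^ 2 ≠ 0 := by simpa using h.ne_zero hc x
  have hnorm_sq : ContDiffMemLp n ∞ (fun x ↦ ‖u x‖ ^ 2) := by
    simp_rw [← real_inner_self_eq_norm_sq]
    exact (h.contDiffMemLp_top hW n).bilin (innerSL ℝ) (h.contDiffMemLp_top hW n)
  have hcont : Continuous (fun x ↦ (‖u x‖ ^ 2)⁻¹) := hnorm_sq.contDiff.continuous.inv₀ hne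
  have hinv : MemLp (fun x ↦ (‖u x‖ ^ 2)⁻¹) ∞ := (memLp_top_iff_bddAbove_range_norm hcont).2
    (bddAbove_range_norm_of_tendsto_cocompact hcont ((h.tendsto_norm_sq hW).inv₀ one_ne_zero))
  rw [funext h.im_logDeriv]
  exact ((h.contDiffMemLp_one_sub_norm_sq hW n).bilin (.mul ℝ ℝ)
    (hnorm_sq.inv hne hinv)).clm_comp (.mul ℝ ℝ (c / 2))

theorem exists_phase (h : IsFiniteEnergyTravelingWave W c u) (hW : Integrable W) (hc : c ≠ 0) :
    ∃ θ : ℝ → ℝ, Differentiable ℝ θ ∧ (∀ n, ContDiffMemLp n 2 (deriv θ)) ∧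
      ∀ x, u x = ‖u x‖ * Complex.exp (Complex.I * θ x) := by
  obtain ⟨θ, hθ, hpolar⟩ :=
    exists_hasDerivAt_im_logDeriv_eq_norm_mul_exp h.contDiff_one (h.ne_zero hc)
  refine ⟨θ, fun x ↦ (hθ x).differentiableAt, ?_, hpolar⟩
  rw [funext fun x ↦ (hθ x).deriv]
  exact h.contDiffMemLp_im_logDeriv hW hc

end Momentum

end IsFiniteEnergyTravelingWave

theorem darkSoliton_lifting_and_decay_general {W : ℝ → ℝ} (hW : Integrable W) {c : ℝ} (hc : c ≠ 0)
    {u : ℝ → ℂ} (h : IsFiniteEnergyTravelingWave W c u) :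
    ContDiff ℝ (⊤ : ℕ∞) u ∧
    ∃ θ η : ℝ → ℝ,
      ContDiff ℝ (⊤ : ℕ∞) θ ∧ ContDiff ℝ (⊤ : ℕ∞) η ∧
      (∀ x, η x < 1) ∧
      (∀ x, u x = ((Real.sqrt (1 - η x) : ℝ) : ℂ) * Complex.exp (Complex.I * (θ x : ℂ))) ∧
      (∀ j : ℕ, MemLp (iteratedDeriv j (deriv θ)) 2 (volume : Measure ℝ)) ∧
      (∀ j : ℕ, MemLp (iteratedDeriv j η) 2 (volume : Measure ℝ)) ∧
      Tendsto (fun x => ‖u x‖) atTop (nhds 1) ∧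
      Tendsto (fun x => ‖u x‖) atBot (nhds 1) ∧
      (∀ j : ℕ, 1 ≤ j →
        Tendsto (iteratedDeriv j u) atTop (nhds 0) ∧
        Tendsto (iteratedDeriv j u) atBot (nhds 0) ∧
        Tendsto (iteratedDeriv j θ) atTop (nhds 0) ∧
        Tendsto (iteratedDeriv j θ) atBot (nhds 0) ∧
        Tendsto (iteratedDeriv j η) atTop (nhds 0) ∧
        Tendsto (iteratedDeriv j η) atBot (nhds 0)) := by
  obtain ⟨θ, hθ, hθ', hpolar⟩ := h.exists_phase hW hc
  have hu' := h.contDiffMemLp_deriv hW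
  have hη := h.contDiffMemLp_one_sub_norm_sq hW
  have hnorm := h.tendsto_norm hW
  refine ⟨ContDiffMemLp.contDiff_infty_of_deriv h.differentiable hu', θ, fun x ↦ 1 - ‖u x‖ ^ 2,
    ContDiffMemLp.contDiff_infty_of_deriv hθ hθ', contDiff_infty.2 fun n ↦ (hη n).contDiff,
    fun x ↦ ?_, fun x ↦ ?_, fun j ↦ (hθ' j).memLp_iteratedDeriv j le_rfl,
    fun j ↦ (hη j).memLp_iteratedDeriv j le_rfl, hnorm.mono_left atTop_le_cocompact,
    hnorm.mono_left atBot_le_cocompact, ?_⟩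
  · exact sub_lt_self 1 (pow_pos (norm_pos_iff.2 (h.ne_zero hc x)) 2)
  · simpa using hpolar x
  · rintro (_ | k) hk
    · contradiction
    · rw [iteratedDeriv_succ' (f := u), iteratedDeriv_succ' (f := θ)]
      exact ⟨(hu' _).tendsto_iteratedDeriv_atTop, (hu' _).tendsto_iteratedDeriv_atBot,
        (hθ' _).tendsto_iteratedDeriv_atTop, (hθ' _).tendsto_iteratedDeriv_atBot,
        (hη _).tendsto_iteratedDeriv_atTop, (hη _).tendsto_iteratedDeriv_atBot⟩

/-- Decay and lifting properties of dark solitons: a bounded smooth finite-energy solution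
`u` of the nonlocal traveling-wave equation with speed `c > 0` admits a smooth lifting
`u = √(1 - η) e^{iθ}` with `η < 1`, `θ' ∈ Hᵏ(ℝ)` and `η ∈ Hᵏ(ℝ)` for all `k`,
`|u| → 1` at `±∞`, and all derivatives of `u`, `θ`, `η` of order `≥ 1` tend to `0`
at `±∞`. -/
theorem darkSoliton_lifting_and_decay
    (W : ℝ → ℝ) (hW_int : Integrable W) (hW_even : ∀ x, W (-x) = W x)
    (c : ℝ) (hc : 0 < c)
    (u : ℝ → ℂ) (hu_smooth : ContDiff ℝ (⊤ : ℕ∞) u)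
    (hu_bdd : ∃ M : ℝ, ∀ x, ‖u x‖ ≤ M)
    (hu_deriv : MemLp (deriv u) 2 (volume : Measure ℝ))
    (hu_mod : MemLp (fun x : ℝ => 1 - ‖u x‖ ^ 2) 2 (volume : Measure ℝ))
    (heq : ∀ x : ℝ,
      Complex.I * (c : ℂ) * deriv u x + deriv (deriv u) x +
        (((∫ t : ℝ, W t * (1 - ‖u (x - t)‖ ^ 2)) : ℝ) : ℂ) * u x = 0) :
    ∃ θ η : ℝ → ℝ,
      ContDiff ℝ (⊤ : ℕ∞) θ ∧ ContDiff ℝ (⊤ : ℕ∞) η ∧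
      (∀ x, η x < 1) ∧
      (∀ x, u x = ((Real.sqrt (1 - η x) : ℝ) : ℂ) * Complex.exp (Complex.I * (θ x : ℂ))) ∧
      (∀ j : ℕ, MemLp (iteratedDeriv j (deriv θ)) 2 (volume : Measure ℝ)) ∧
      (∀ j : ℕ, MemLp (iteratedDeriv j η) 2 (volume : Measure ℝ)) ∧
      Tendsto (fun x => ‖u x‖) atTop (nhds 1) ∧
      Tendsto (fun x => ‖u x‖) atBot (nhds 1) ∧
      (∀ j : ℕ, 1 ≤ j →
        Tendsto (iteratedDeriv j u) atTop (nhds 0) ∧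
        Tendsto (iteratedDeriv j u) atBot (nhds 0) ∧
        Tendsto (iteratedDeriv j θ) atTop (nhds 0) ∧
        Tendsto (iteratedDeriv j θ) atBot (nhds 0) ∧
        Tendsto (iteratedDeriv j η) atTop (nhds 0) ∧
        Tendsto (iteratedDeriv j η) atBot (nhds 0)) :=
  (darkSoliton_lifting_and_decay_general hW_int hc.ne' ⟨hu_smooth.differentiable (by simp),
    (contDiff_infty_iff_deriv.1 hu_smooth).2.differentiable (by simp), hu_deriv, hu_mod, heq⟩).2
end
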